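/- Let F(x) = f(x) + P₁(x) − P₂(x) be level-bounded, let {x^k} and {ξ^k} be the sequences generated by pDCA_e for minimizing F, and let Υ be the set of accumulation points of {(x^k, ξ^k, x^{k−1})}. Then the limit ζ := lim_{k→∞} E(x^k, ξ^k, x^{k−1}) exists, and E is identically equal to ζ on Υ. -/

import Mathlib

/-!
Write `F = f + P₁ - P₂` and `e k = E(x (k+1), ξ (k+1), x k)`. Since `ξ (k+1) ∈ ∂P₂ (x k)`, the
conjugate is explicit, `P₂* (ξ (k+1)) = ⟪x k, ξ (k+1)⟫ - P₂ (x k)` (`conjE_eq_of_subgrad`), so `e k`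
is a real number and the subgradient inequality gives `F (x (k+1)) + L/2 ‖x (k+1) - x k‖² ≤ e k`.
In the other direction, the descent lemma (`descent_ineq`), strong convexity of the proximal
subproblem (`prox_strong_min`) and the gradient inequality (`convex_gradient_ineq`) yield
`e k ≤ F (x k) + L/2 (β k)² ‖x k - x (k-1)‖²`. With `β k ≤ B < 1` these combine to
`e (k+1) + L/2 (1 - B²) ‖x (k+1) - x k‖² ≤ e k`.

Thus `e` is nonincreasing; level-boundedness and lower semicontinuity bound it below, so `e k → ζ`
and `x (k+1) - x k → 0`. An accumulation point therefore has the form `(a, b, a)`, with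
`b ∈ ∂P₂ (a)` by continuity of `P₂`, and `E(a, b, a) = F a`. Along the corresponding subsequence
`P₁ (x (k+1)) → ζ - f a + P₂ a`. This limit is at least `P₁ a` by lower semicontinuity and at most
`P₁ a` by comparing the minimizer `x (k+1)` with `a` in the subproblem; hence `F a = ζ`.
-/

open Filter Topology Set Metric Bornology
open scoped RealInnerProductSpace

noncomputable section

abbrev Eucl (n : ℕ) := EuclideanSpace ℝ (Fin n)

variable {H : Type*} [NormedAddCommGroup H] [InnerProductSpace ℝ H]

/-- Fréchet (regular) subgradient of an extended-real-valued function. -/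
def FrechetSubgradAt (h : H → EReal) (v x : H) : Prop :=
  ∀ ε : ℝ, 0 < ε →
    ∀ᶠ y in 𝓝[≠] x, h x + ((⟪v, y - x⟫ - ε * ‖y - x‖ : ℝ) : EReal) ≤ h y

/-- Limiting (Mordukhovich) subdifferential. -/
def limSubdiff (h : H → EReal) (x : H) : Set H :=
  {v | ∃ xs vs : ℕ → H,
    Tendsto xs atTop (𝓝 x) ∧
    Tendsto (fun k => h (xs k)) atTop (𝓝 (h x)) ∧
    Tendsto vs atTop (𝓝 v) ∧
    ∀ k, FrechetSubgradAt h (vs k) (xs k)}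

/-- Convex subgradient of a real-valued function. -/
def ConvexSubgradAt (g : H → ℝ) (v x : H) : Prop :=
  ∀ y, g x + ⟪v, y - x⟫ ≤ g y

/-- Convex subgradient of an extended-real-valued function. -/
def ConvexSubgradAtE (g : H → EReal) (v x : H) : Prop :=
  ∀ y, g x + ((⟪v, y - x⟫ : ℝ) : EReal) ≤ g y

/-- Convex conjugate of a real-valued function. -/
def conjE (g : H → ℝ) (y : H) : EReal :=
  ⨆ x : H, ((⟪x, y⟫ - g x : ℝ) : EReal)

/-- `P` is proper, closed (lsc) and convex. -/
def ProperClosedConvexE (P : H → EReal) : Prop :=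
  (∀ x, P x ≠ ⊥) ∧ (∃ x, P x ≠ ⊤) ∧ LowerSemicontinuous P ∧
  (∀ x y : H, ∀ t : ℝ, t ∈ Ioo (0:ℝ) 1 →
    P (t • x + (1 - t) • y) ≤ (t : EReal) * P x + ((1 - t : ℝ) : EReal) * P y)

/-- KL property with exponent `α` at a point. -/
def KLExpAt (h : H → EReal) (α : ℝ) (x₀ : H) : Prop :=
  ∃ c > (0:ℝ), ∃ ε > (0:ℝ), ∃ a > (0:ℝ), ∀ x : H,
    ‖x - x₀‖ ≤ ε → h x₀ < h x → h x < h x₀ + (a : EReal) →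
    (limSubdiff h x).Nonempty →
    1 ≤ c * (1 - α) * ((h x).toReal - (h x₀).toReal) ^ (-α) * infDist 0 (limSubdiff h x)

/-- KL function with exponent `α`. -/
def IsKLWithExp (h : H → EReal) (α : ℝ) : Prop :=
  ∀ x₀ : H, (limSubdiff h x₀).Nonempty → KLExpAt h α x₀

/-- KL property (general desingularizing function) at a point. -/
def KLAt (h : H → EReal) (x₀ : H) : Prop :=
  ∃ a > (0:ℝ), ∃ U ∈ 𝓝 x₀, ∃ φ φd : ℝ → ℝ,
    ContinuousOn φ (Ico 0 a) ∧ ConcaveOn ℝ (Ico 0 a) φ ∧ φ 0 = 0 ∧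
    (∀ s ∈ Ico (0:ℝ) a, 0 ≤ φ s) ∧
    (∀ s ∈ Ioo (0:ℝ) a, HasDerivAt φ (φd s) s ∧ 0 < φd s) ∧
    ∀ x ∈ U, h x₀ < h x → h x < h x₀ + (a : EReal) → (limSubdiff h x).Nonempty →
      1 ≤ φd ((h x).toReal - (h x₀).toReal) * infDist 0 (limSubdiff h x)

/-- KL function. -/
def IsKLFun (h : H → EReal) : Prop :=
  ∀ x₀ : H, (limSubdiff h x₀).Nonempty → KLAt h x₀

/-- The potential function `E(x,y,w) = f(x) + P₁(x) - ⟨x,y⟩ + P₂*(y) + L/2 ‖x-w‖²`. -/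
def potE (f : H → ℝ) (P₁ : H → EReal) (P₂ : H → ℝ) (L : ℝ) (x y w : H) : EReal :=
  ((f x : ℝ) : EReal) + P₁ x - ((⟪x, y⟫ : ℝ) : EReal) + conjE P₂ y
    + ((L / 2 * ‖x - w‖ ^ 2 : ℝ) : EReal)

/-- The pDCAe iteration: `ξ^{k+1} ∈ ∂P₂(x^k)`, `u^k = x^k + β_k (x^k - x^{k-1})` and
`x^{k+1}` is the minimizer of `⟨∇f(u^k) - ξ^{k+1}, ·⟩ + L/2 ‖· - u^k‖² + P₁(·)`.
(`x⁻¹ = x⁰` is encoded by truncated subtraction in `ℕ`.) -/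
def IsPDCAe (f' : H → H) (P₁ : H → EReal) (P₂ : H → ℝ) (L : ℝ) (β : ℕ → ℝ)
    (x ξ : ℕ → H) : Prop :=
  P₁ (x 0) ≠ ⊤ ∧
  (∀ k : ℕ, ConvexSubgradAt P₂ (ξ (k + 1)) (x k)) ∧
  (∀ k : ℕ, ∀ z : H,
    ((⟪f' (x k + β k • (x k - x (k - 1))) - ξ (k + 1), x (k + 1)⟫
        + L / 2 * ‖x (k + 1) - (x k + β k • (x k - x (k - 1)))‖ ^ 2 : ℝ) : EReal)
      + P₁ (x (k + 1))
      ≤ ((⟪f' (x k + β k • (x k - x (k - 1))) - ξ (k + 1), z⟫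
        + L / 2 * ‖z - (x k + β k • (x k - x (k - 1)))‖ ^ 2 : ℝ) : EReal) + P₁ z)

/-- Triples `(x, y, w)` with the ℓ² product inner product structure. -/
abbrev Trip (n : ℕ) := WithLp 2 (Eucl n × WithLp 2 (Eucl n × Eucl n))

def mkTrip {n : ℕ} (a b c : Eucl n) : Trip n :=
  (WithLp.equiv 2 _).symm (a, (WithLp.equiv 2 _).symm (b, c))

/-- `potE` as a function on triples. -/
def potE3 {n : ℕ} (f : Eucl n → ℝ) (P₁ : Eucl n → EReal) (P₂ : Eucl n → ℝ) (L : ℝ)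
    (p : Trip n) : EReal :=
  potE f P₁ P₂ L ((WithLp.equiv 2 _) p).1 ((WithLp.equiv 2 _) ((WithLp.equiv 2 _) p).2).1
    ((WithLp.equiv 2 _) ((WithLp.equiv 2 _) p).2).2

theorem hasDerivAt_comp_line [CompleteSpace H] {f : H → ℝ} {f' : H → H}
    (hf : ∀ y, HasGradientAt f (f' y) y) (u v : H) (t : ℝ) :
    HasDerivAt (fun s : ℝ => f (u + s • v)) ⟪f' (u + t • v), v⟫ t := by
  have h1 : HasDerivAt (fun s : ℝ => u + s • v) v t := by
    simpa using ((hasDerivAt_id t).smul_const v).const_add u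
  exact ((hf (u + t • v)).hasFDerivAt.comp_hasDerivAt t h1).congr_deriv (by simp)

theorem convex_gradient_ineq [CompleteSpace H] {f : H → ℝ} {f' : H → H}
    (hc : ConvexOn ℝ Set.univ f) (hf : ∀ y, HasGradientAt f (f' y) y) (u z : H) :
    f u + ⟪f' u, z - u⟫ ≤ f z := by
  have hconv : ConvexOn ℝ Set.univ (fun s : ℝ => f (u + s • (z - u))) := by
    refine ⟨convex_univ, fun a _ b _ s t hs ht hst => ?_⟩
    have := hc.2 (mem_univ (u + a • (z - u))) (mem_univ (u + b • (z - u))) hs ht hst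
    convert this using 2
    have : u = (s + t) • u := by simp [hst]
    nth_rewrite 1 [this]
    simp only [smul_eq_mul]
    module
  have hd := hasDerivAt_comp_line hf u (z - u) 0
  have := hconv.le_slope_of_hasDerivAt (mem_univ 0) (mem_univ 1) one_pos hd
  simp [slope_def_field] at this
  linarith

/-- The descent lemma for a function with `L`-Lipschitz gradient. -/
theorem descent_ineq [CompleteSpace H] {f : H → ℝ} {f' : H → H} {L : ℝ}
    (hf : ∀ y, HasGradientAt f (f' y) y)
    (hlip : ∀ y z, ‖f' y - f' z‖ ≤ L * ‖y - z‖) (u z : H) :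
    f z ≤ f u + ⟪f' u, z - u⟫ + L / 2 * ‖z - u‖ ^ 2 := by
  set v := z - u with hv
  -- The gap `f (u + t v) - t ⟪f' u, v⟫ - (L/2) t² ‖v‖²` is nonincreasing in `t ≥ 0`.
  have hd : ∀ t : ℝ, HasDerivAt
      (fun s : ℝ => f (u + s • v) - s * ⟪f' u, v⟫ - L / 2 * ‖v‖ ^ 2 * s ^ 2)
      (⟪f' (u + t • v), v⟫ - ⟪f' u, v⟫ - L * ‖v‖ ^ 2 * t) t := by
    intro t
    refine (((hasDerivAt_comp_line hf u v t).sub ((hasDerivAt_id t).mul_const ⟪f' u, v⟫)).sub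
      ((hasDerivAt_pow 2 t).const_mul (L / 2 * ‖v‖ ^ 2))).congr_deriv ?_
    simp only [Nat.cast_ofNat, Nat.add_one_sub_one, pow_one]
    ring
  have hanti : AntitoneOn
      (fun s : ℝ => f (u + s • v) - s * ⟪f' u, v⟫ - L / 2 * ‖v‖ ^ 2 * s ^ 2) (Icc 0 1) := by
    refine antitoneOn_of_deriv_nonpos (convex_Icc 0 1)
      (fun t _ => (hd t).continuousAt.continuousWithinAt)
      (fun t _ => (hd t).differentiableAt.differentiableWithinAt) (fun t ht => ?_)
    rw [interior_Icc] at ht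
    rw [(hd t).deriv]
    have h1 : ⟪f' (u + t • v) - f' u, v⟫ ≤ L * (t * ‖v‖) * ‖v‖ := by
      refine (real_inner_le_norm _ _).trans ?_
      gcongr
      refine (hlip _ _).trans_eq ?_
      simp [norm_smul, abs_of_pos ht.1]
    rw [inner_sub_left] at h1
    nlinarith
  have := hanti (left_mem_Icc.2 zero_le_one) (right_mem_Icc.2 zero_le_one) zero_le_one
  simp [hv] at this
  linarith

/-- If `y ∈ ∂g(x)`, the supremum defining `g*(y)` is attained at `x`. -/
theorem conjE_eq_of_subgrad {g : H → ℝ} {y w : H} (h : ConvexSubgradAt g y w) :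
    conjE g y = ((⟪w, y⟫ - g w : ℝ) : EReal) := by
  apply le_antisymm
  · refine iSup_le fun z => EReal.coe_le_coe_iff.2 ?_
    have := h z
    rw [inner_sub_right, real_inner_comm, real_inner_comm w] at this
    linarith
  · exact le_iSup (fun x : H => ((⟪x, y⟫ - g x : ℝ) : EReal)) w

theorem potE_eq_coe {f : H → ℝ} {P₁ : H → EReal} {P₂ : H → ℝ} {L : ℝ} {a y w w' : H} {r : ℝ}
    (hr : P₁ a = r) (h : ConvexSubgradAt P₂ y w) :
    potE f P₁ P₂ L a y w' =
      ((f a + r - ⟪a, y⟫ + (⟪w, y⟫ - P₂ w) + L / 2 * ‖a - w'‖ ^ 2 : ℝ) : EReal) := by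
  rw [potE, conjE_eq_of_subgrad h, hr]
  norm_cast

/-- The proximal objective is `L`-strongly convex, so its minimizer `m` beats any other
point `z` by at least `(L/2) ‖z - m‖²`. -/
theorem prox_strong_min {P₁ : H → EReal} (hP : ProperClosedConvexE P₁) {L : ℝ} {a u m z : H}
    {pm pz : ℝ} (hpm : P₁ m = pm) (hpz : P₁ z = pz)
    (hmin : ∀ y : H, ((⟪a, m⟫ + L / 2 * ‖m - u‖ ^ 2 : ℝ) : EReal) + P₁ m
      ≤ ((⟪a, y⟫ + L / 2 * ‖y - u‖ ^ 2 : ℝ) : EReal) + P₁ y) :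
    ⟪a, m⟫ + L / 2 * ‖m - u‖ ^ 2 + pm + L / 2 * ‖z - m‖ ^ 2
      ≤ ⟪a, z⟫ + L / 2 * ‖z - u‖ ^ 2 + pz := by
  have key : ∀ t ∈ Ioo (0:ℝ) 1,
      ⟪a, m⟫ + L / 2 * ‖m - u‖ ^ 2 + pm + L / 2 * ((1 - t) * ‖z - m‖ ^ 2)
        ≤ ⟪a, z⟫ + L / 2 * ‖z - u‖ ^ 2 + pz := by
    intro t ht
    have h1 := (hmin (t • z + (1 - t) • m)).trans (add_le_add le_rfl (hP.2.2.2 z m t ht))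
    rw [hpm, hpz] at h1
    norm_cast at h1
    have h2 : ‖t • z + (1 - t) • m - u‖ ^ 2
        = t * ‖z - u‖ ^ 2 + (1 - t) * ‖m - u‖ ^ 2 - t * (1 - t) * ‖z - m‖ ^ 2 := by
      have e1 : t • z + (1 - t) • m - u = t • (z - u) + (1 - t) • (m - u) := by module
      have e2 : z - m = (z - u) - (m - u) := by abel
      rw [e1, e2, norm_add_sq_real, norm_sub_sq_real (z - u), norm_smul, norm_smul, inner_smul_left,
        inner_smul_right, mul_pow, mul_pow]
      simp only [Real.norm_eq_abs, sq_abs, conj_trivial]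
      ring
    rw [h2, inner_add_right, inner_smul_right, inner_smul_right] at h1
    refine le_of_mul_le_mul_left ?_ ht.1
    linarith
  have hlim : Tendsto (fun t : ℝ => ⟪a, m⟫ + L / 2 * ‖m - u‖ ^ 2 + pm
      + L / 2 * ((1 - t) * ‖z - m‖ ^ 2)) (𝓝[>] 0)
      (𝓝 (⟪a, m⟫ + L / 2 * ‖m - u‖ ^ 2 + pm + L / 2 * ((1 - 0) * ‖z - m‖ ^ 2))) := by
    apply tendsto_nhdsWithin_of_tendsto_nhds
    apply Continuous.tendsto
    fun_prop
  have := le_of_tendsto hlim (by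
    filter_upwards [Ioo_mem_nhdsGT (zero_lt_one (α := ℝ))] with t ht using key t ht)
  simpa using this

/-- Proposition 1(iii): the limit `ζ` of `E(xᵏ, ξᵏ, xᵏ⁻¹)` exists and `E ≡ ζ` on the set `Υ`
of accumulation points of `{(xᵏ, ξᵏ, xᵏ⁻¹)}`. -/
theorem pDCAe_potE_limit_const_on_accumulation
    {n : ℕ} (f : Eucl n → ℝ) (f' : Eucl n → Eucl n) (P₁ : Eucl n → EReal)
    (P₂ : Eucl n → ℝ) (L : ℝ) (β : ℕ → ℝ) (x ξ : ℕ → Eucl n)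
    (hL : 0 < L)
    (hfconv : ConvexOn ℝ Set.univ f)
    (hfgrad : ∀ y, HasGradientAt f (f' y) y)
    (hflip : ∀ y z, ‖f' y - f' z‖ ≤ L * ‖y - z‖)
    (hP₁ : ProperClosedConvexE P₁)
    (hP₂cont : Continuous P₂)
    (hP₂conv : ConvexOn ℝ Set.univ P₂)
    (hβ : ∀ k, β k ∈ Set.Ico (0:ℝ) 1)
    (hβsup : ∃ B < (1:ℝ), ∀ k, β k ≤ B)
    (hlevel : ∀ γ : ℝ, IsBounded {y : Eucl n |
      ((f y : ℝ) : EReal) + P₁ y - ((P₂ y : ℝ) : EReal) ≤ (γ : EReal)})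
    (hseq : IsPDCAe f' P₁ P₂ L β x ξ)
    : ∃ ζ : EReal,
      Tendsto (fun k : ℕ => potE f P₁ P₂ L (x (k + 1)) (ξ (k + 1)) (x k)) atTop (𝓝 ζ) ∧
      ∀ p ∈ {p : Trip n |
          MapClusterPt p atTop (fun k : ℕ => mkTrip (x (k + 1)) (ξ (k + 1)) (x k))},
        potE3 f P₁ P₂ L p = ζ := by
  obtain ⟨h0, hsub, hmin⟩ := hseq
  obtain ⟨B, hB1, hB⟩ := hβsup
  have hB0 : 0 ≤ B := (hβ 0).1.trans (hB 0)
  have hfc : Continuous f := continuous_iff_continuousAt.2 fun y => (hfgrad y).continuousAt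
  have hfin : ∀ k, P₁ (x k) ≠ ⊤ := by
    rintro (_ | k)
    · exact h0
    · intro h
      have h1 := hmin k (x 0)
      rw [h, EReal.coe_add_top, top_le_iff] at h1
      exact EReal.add_ne_top (EReal.coe_ne_top _) h0 h1
  obtain ⟨p, hp⟩ : ∃ p : ℕ → ℝ, ∀ k, P₁ (x k) = p k :=
    ⟨fun k => (P₁ (x k)).toReal, fun k => (EReal.coe_toReal (hfin k) (hP₁.1 _)).symm⟩
  -- `e k` is the real value of the potential at `(x (k+1), ξ (k+1), x k)`.
  set e : ℕ → ℝ := fun k => f (x (k + 1)) + p (k + 1) - ⟪x (k + 1), ξ (k + 1)⟫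
    + (⟪x k, ξ (k + 1)⟫ - P₂ (x k)) + L / 2 * ‖x (k + 1) - x k‖ ^ 2 with he
  have hE : ∀ k, potE f P₁ P₂ L (x (k + 1)) (ξ (k + 1)) (x k) = (e k : EReal) := fun k =>
    potE_eq_coe (hp (k + 1)) (hsub k)
  -- Descent lemma at `u`, strong minimality of `x (k+1)` against `x k`, and convexity of `f`.
  have hupper : ∀ k, e k ≤ f (x k) + p k - P₂ (x k)
      + L / 2 * (β k ^ 2 * ‖x k - x (k - 1)‖ ^ 2) := by
    intro k
    have h1 := prox_strong_min hP₁ (hp (k + 1)) (hp k) (hmin k)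
    set u := x k + β k • (x k - x (k - 1)) with hu
    have h2 := descent_ineq hfgrad hflip u (x (k + 1))
    have h3 := convex_gradient_ineq hfconv hfgrad u (x k)
    have h4 : ‖x k - u‖ ^ 2 = β k ^ 2 * ‖x k - x (k - 1)‖ ^ 2 := by
      have : x k - u = -(β k • (x k - x (k - 1))) := by rw [hu]; abel
      rw [this, norm_neg, norm_smul, mul_pow, Real.norm_eq_abs, sq_abs]
    rw [h4, norm_sub_rev (x k) (x (k + 1))] at h1
    simp only [inner_sub_left, inner_sub_right] at h1 h2 h3
    rw [real_inner_comm _ (ξ (k + 1)), real_inner_comm _ (ξ (k + 1))] at h1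
    simp only [he]
    linarith
  have hlower : ∀ k, f (x (k + 1)) + p (k + 1) - P₂ (x (k + 1))
      + L / 2 * ‖x (k + 1) - x k‖ ^ 2 ≤ e k := by
    intro k
    have h1 := hsub k (x (k + 1))
    rw [inner_sub_right, real_inner_comm, real_inner_comm (x k)] at h1
    simp only [he]
    linarith
  have hstep : ∀ k, e (k + 1) + L / 2 * (1 - B ^ 2) * ‖x (k + 1) - x k‖ ^ 2 ≤ e k := by
    intro k
    have h1 := hupper (k + 1)
    have h2 := hlower k
    rw [Nat.add_sub_cancel] at h1
    have h3 : β (k + 1) ^ 2 ≤ B ^ 2 := pow_le_pow_left₀ (hβ _).1 (hB _) 2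
    have h4 : L / 2 * (β (k + 1) ^ 2 * ‖x (k + 1) - x k‖ ^ 2)
        ≤ L / 2 * (B ^ 2 * ‖x (k + 1) - x k‖ ^ 2) := by gcongr
    linarith
  have hc : 0 < L / 2 * (1 - B ^ 2) := mul_pos (half_pos hL) (by nlinarith)
  have hanti : Antitone e := antitone_nat_of_succ_le fun k => by
    have := hstep k
    have : 0 ≤ L / 2 * (1 - B ^ 2) * ‖x (k + 1) - x k‖ ^ 2 := by positivity
    linarith
  -- By `hlower`, the iterates stay in a level set of `F`, whose closure is compact, and `F` is
  -- bounded below there because `P₁` is lower semicontinuous and never `⊥`.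
  have hbdd : BddBelow (range e) := by
    set K := closure {y : Eucl n |
      ((f y : ℝ) : EReal) + P₁ y - ((P₂ y : ℝ) : EReal) ≤ (e 0 : EReal)} with hK
    have hKc : IsCompact K := (hlevel (e 0)).isCompact_closure
    have hmem : ∀ k, x (k + 1) ∈ K := by
      intro k
      refine subset_closure ?_
      rw [mem_ofPred_eq, hp]
      norm_cast
      have h1 := hlower k
      have h2 := hanti (Nat.zero_le k)
      have : 0 ≤ L / 2 * ‖x (k + 1) - x k‖ ^ 2 := by positivity
      linarith
    obtain ⟨a, -, ha⟩ := LowerSemicontinuousOn.exists_isMinOn ⟨_, hmem 0⟩ hKc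
      (hP₁.2.2.1.lowerSemicontinuousOn K)
    have haP : ∀ k, (P₁ a).toReal ≤ p (k + 1) := by
      intro k
      have h1 : P₁ a ≤ P₁ (x (k + 1)) := ha (hmem k)
      simpa [hp] using EReal.toReal_le_toReal h1 (hP₁.1 a) (hfin (k + 1))
    obtain ⟨c, hc⟩ := hKc.bddBelow_image (f := fun y => f y - P₂ y)
      (hfc.sub hP₂cont).continuousOn
    refine ⟨c + (P₁ a).toReal, ?_⟩
    rintro _ ⟨k, rfl⟩
    have h1 := hlower k
    have h2 := haP k
    have h3 : c ≤ f (x (k + 1)) - P₂ (x (k + 1)) := hc (mem_image_of_mem _ (hmem k))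
    have : 0 ≤ L / 2 * ‖x (k + 1) - x k‖ ^ 2 := by positivity
    linarith
  obtain ⟨ζ, hζ⟩ : ∃ ζ : ℝ, Tendsto e atTop (𝓝 ζ) := ⟨_, tendsto_atTop_ciInf hanti hbdd⟩
  have hdiff : Tendsto (fun k => x (k + 1) - x k) atTop (𝓝 0) := by
    have h1 : Tendsto (fun k => (e k - e (k + 1)) / (L / 2 * (1 - B ^ 2))) atTop (𝓝 0) := by
      simpa using (hζ.sub (hζ.comp (tendsto_add_atTop_nat 1))).div_const (L / 2 * (1 - B ^ 2))
    have h2 : Tendsto (fun k => ‖x (k + 1) - x k‖ ^ 2) atTop (𝓝 0) := by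
      refine squeeze_zero (fun k => by positivity) (fun k => ?_) h1
      rw [le_div_iff₀ hc]
      have := hstep k
      linarith
    rw [tendsto_zero_iff_norm_tendsto_zero]
    simpa using h2.sqrt
  refine ⟨(ζ : EReal), ?_, ?_⟩
  · simp_rw [hE]
    exact (continuous_coe_real_ereal.tendsto ζ).comp hζ
  intro q hq
  obtain ⟨φ, hφ, hlim⟩ := MapClusterPt.tendsto_subseq hq
  have hφt := hφ.tendsto_atTop
  have hsnd := ((continuous_snd.comp (WithLp.prod_continuous_ofLp 2 _ _)).tendsto q).comp hlim
  set a : Eucl n := (WithLp.ofLp q).1 with ha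
  set b : Eucl n := (WithLp.ofLp (WithLp.ofLp q).2).1 with hb
  set w : Eucl n := (WithLp.ofLp (WithLp.ofLp q).2).2 with hw
  have hxa : Tendsto (fun j => x (φ j + 1)) atTop (𝓝 a) :=
    ((continuous_fst.comp (WithLp.prod_continuous_ofLp 2 _ _)).tendsto q).comp hlim
  have hξb : Tendsto (fun j => ξ (φ j + 1)) atTop (𝓝 b) :=
    ((continuous_fst.comp (WithLp.prod_continuous_ofLp 2 _ _)).tendsto _).comp hsnd
  have hxw : Tendsto (fun j => x (φ j)) atTop (𝓝 w) :=
    ((continuous_snd.comp (WithLp.prod_continuous_ofLp 2 _ _)).tendsto _).comp hsnd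
  have hdφ : Tendsto (fun j => x (φ j + 1) - x (φ j)) atTop (𝓝 0) := hdiff.comp hφt
  have hwa : w = a := by
    have h1 := tendsto_nhds_unique (hxa.sub hxw) hdφ
    exact (sub_eq_zero.1 h1).symm
  change potE f P₁ P₂ L a b w = _
  rw [hwa] at hxw ⊢
  have hsubab : ConvexSubgradAt P₂ b a := fun y =>
    le_of_tendsto' (((hP₂cont.tendsto a).comp hxw).add (hξb.inner (hxw.const_sub y)))
      fun j => hsub (φ j) y
  have hplim : Tendsto (fun j => p (φ j + 1)) atTop (𝓝 (ζ - f a + P₂ a)) := by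
    have h1 : Tendsto (fun j => e (φ j) - f (x (φ j + 1)) + ⟪x (φ j + 1) - x (φ j), ξ (φ j + 1)⟫
        + P₂ (x (φ j)) - L / 2 * ‖x (φ j + 1) - x (φ j)‖ ^ 2) atTop
        (𝓝 (ζ - f a + ⟪(0 : Eucl n), b⟫ + P₂ a - L / 2 * ‖(0 : Eucl n)‖ ^ 2)) :=
      ((((hζ.comp hφt).sub ((hfc.tendsto a).comp hxa)).add (hdφ.inner hξb)).add
        ((hP₂cont.tendsto a).comp hxw)).sub ((hdφ.norm.pow 2).const_mul _)
    rw [inner_zero_left, norm_zero] at h1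
    convert h1 using 2
    · simp only [he, inner_sub_left]
      ring
    · ring
  -- Lower semicontinuity bounds `P₁ a` above by the limit of `P₁ (x (φ j + 1))`.
  have hle : P₁ a ≤ ((ζ - f a + P₂ a : ℝ) : EReal) := by
    by_contra! hlt
    obtain ⟨c, hc1, hc2⟩ := EReal.lt_iff_exists_real_btwn.1 hlt
    have h1 := hxa.eventually (hP₁.2.2.1 a c hc2)
    have h2 := hplim.eventually (gt_mem_nhds (EReal.coe_lt_coe_iff.1 hc1))
    obtain ⟨j, hj1, hj2⟩ := (h1.and h2).exists
    rw [hp, gt_iff_lt, EReal.coe_lt_coe_iff] at hj1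
    exact lt_asymm hj1 hj2
  obtain ⟨s, hs⟩ : ∃ s : ℝ, P₁ a = s :=
    ⟨_, (EReal.coe_toReal (ne_top_of_le_ne_top (EReal.coe_ne_top _) hle) (hP₁.1 a)).symm⟩
  have hu : Tendsto (fun j => x (φ j) + β (φ j) • (x (φ j) - x (φ j - 1))) atTop (𝓝 a) := by
    have h1 : Tendsto (fun k => x k - x (k - 1)) atTop (𝓝 0) :=
      (tendsto_add_atTop_iff_nat 1).1 (by simpa using hdiff)
    have h2 : Tendsto (fun k => β k • (x k - x (k - 1))) atTop (𝓝 0) := by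
      refine squeeze_zero_norm (fun k => ?_) (tendsto_zero_iff_norm_tendsto_zero.1 h1)
      rw [norm_smul, Real.norm_of_nonneg (hβ k).1]
      exact mul_le_of_le_one_left (norm_nonneg _) (hβ k).2.le
    simpa using hxw.add (h2.comp hφt)
  have hf'c : Continuous f' :=
    (LipschitzWith.of_dist_le_mul (K := ⟨L, hL.le⟩) fun y z => by
      rw [dist_eq_norm, dist_eq_norm]
      exact hflip y z).continuous
  have hf'u := (hf'c.tendsto a).comp hu
  -- Optimality of `x (φ j + 1)` against the competitor `a` gives the reverse bound.
  have hge : ζ - f a + P₂ a ≤ s := by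
    have h1 := ((((hf'u.sub hξb).inner hxa).add
      (((hxa.sub hu).norm.pow 2).const_mul (L / 2))).add hplim)
    have h2 := ((((hf'u.sub hξb).inner (tendsto_const_nhds (x := a))).add
      (((hu.const_sub a).norm.pow 2).const_mul (L / 2))).add (tendsto_const_nhds (x := s)))
    have h3 := le_of_tendsto_of_tendsto' h1 h2 fun j => by
      have h4 := hmin (φ j) a
      rw [hp, hs] at h4
      exact_mod_cast h4
    linarith
  have hs_eq : s = ζ - f a + P₂ a :=
    le_antisymm (EReal.coe_le_coe_iff.1 (hs ▸ hle)) hge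
  rw [potE_eq_coe hs hsubab, EReal.coe_eq_coe_iff, hs_eq, sub_self, norm_zero]
  ring
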